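/- Let K be a countable subfield of ℂ of finite transcendence degree and assume SC_K holds. Let B be a countable subset of ℂ containing K which is strong with respect to δ_K, i.e. for every finite tuple x of complex numbers, δ_K(x/B) ≥ 0. Then the set of all x₀ ∈ ℂ such that either x₀ lies in the ℚ-linear span of B, or there exists a finite tuple x of complex numbers containing x₀, ℚ-linearly independent over the ℚ-linear span of B, with δ_K(x/B) = 0, is countable. -/

import Mathlib

open Complex

noncomputable section

/-- `F`-linear dimension of the `F`-span of a set of complex numbers. -/
def linDim (F : Type*) [Field F] [Algebra F ℂ] (s : Set ℂ) : ℕ :=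
  Module.finrank F (Submodule.span F s)

/-- `F`-linear dimension of `s` over `B`: the dimension of the image of the
`F`-span of `s` in the quotient of ℂ by the `F`-span of `B`. -/
def linDimOver (F : Type*) [Field F] [Algebra F ℂ] (B s : Set ℂ) : ℕ :=
  Module.finrank F ((Submodule.span F s).map (Submodule.span F B).mkQ)

/-- Transcendence degree over ℚ of ℚ(s): the size of the largest algebraically
independent finite subset of `s`. -/
def trdeg (s : Set ℂ) : ℕ :=
  sSup {k : ℕ | ∃ t : Finset ℂ, ↑t ⊆ s ∧ t.card = k ∧
    AlgebraicIndependent ℚ (fun x : {y : ℂ // y ∈ t} => (x : ℂ))}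

/-- Transcendence degree of ℚ(C)(s) over ℚ(C). -/
def trdegOver (C s : Set ℂ) : ℕ :=
  sSup {k : ℕ | ∃ t : Finset ℂ, ↑t ⊆ s ∧ t.card = k ∧
    AlgebraicIndependent (IntermediateField.adjoin ℚ C) (fun x : {y : ℂ // y ∈ t} => (x : ℂ))}

/-- `δ_K(x/B) = lin.d._K(x/B) + trdeg(exp x / exp B) − lin.d._ℚ(x/B)`,
as an integer. -/
def deltaK (K : IntermediateField ℚ ℂ) (B : Set ℂ) {n : ℕ} (x : Fin n → ℂ) : ℤ :=
  (linDimOver K B (Set.range x) : ℤ)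
    + trdegOver (Complex.exp '' B) (Set.range fun i => Complex.exp (x i))
    - linDimOver ℚ B (Set.range x)

end

theorem formallySmooth_of_field (K L : Type) [Field K] [Field L] [Algebra K L] [CharZero K] :
    Algebra.FormallySmooth K L := by
  obtain ⟨s, hs⟩ := exists_isTranscendenceBasis K L
  have h2 := hs.isAlgebraic_field
  have : CharZero (IntermediateField.adjoin K (Set.range ((↑) : s → L))) := 
    charZero_of_injective_algebraMap (algebraMap K _).injective
  exact .of_algebraicIndependent_of_isSeparable hs.1

theorem formallySmooth_of_domain (A L : Type) [CommRing A] [IsDomain A] [Field L] [CharZero A]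
    [Algebra A L] (h : Function.Injective (algebraMap A L)) :
    Algebra.FormallySmooth A L := by
  have : FaithfulSMul A L := (faithfulSMul_iff_algebraMap_injective A L).2 h
  let : Algebra (FractionRing A) L := FractionRing.liftAlgebra A L
  have := formallySmooth_of_field (FractionRing A) L
  have : Algebra.FormallySmooth A (FractionRing A) := .of_isLocalization (nonZeroDivisors _)
  exact .comp _ (FractionRing A) _

theorem lift_ringHom {A L T : Type} [CommRing A] [IsDomain A] [CharZero A] [Field L] [CommRing T]
    (f : A →+* L) (g : A →+* T) (p : T →+* L) (hf : Function.Injective f)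
    (hp : Function.Surjective p) (hk : (RingHom.ker p) ^ 2 = ⊥) (hc : p.comp g = f) :
    ∃ h : L →+* T, p.comp h = RingHom.id L ∧ h.comp f = g := by
  let := f.toAlgebra
  let := g.toAlgebra
  have := formallySmooth_of_domain A L hf
  let p' : T →ₐ[A] L := { p with commutes' := fun a => congrArg (fun q => q a) hc }
  let h := Algebra.FormallySmooth.liftOfSurjective (AlgHom.id A L) p' hp ⟨2, hk⟩
  refine ⟨h.toRingHom, ?_, ?_⟩
  · ext x
    exact Algebra.FormallySmooth.liftOfSurjective_apply (AlgHom.id A L) p' hp ⟨2, hk⟩ x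
  · ext x
    exact h.commutes x

theorem extend_derivation {A : Type} [CommRing A] [IsDomain A] [CharZero A] (f : A →+* ℂ)
    (hf : Function.Injective f) (d : A → ℂ) (hadd : ∀ a b, d (a + b) = d a + d b)
    (hmul : ∀ a b, d (a * b) = f a * d b + f b * d a) :
    ∃ D : Derivation ℤ ℂ ℂ, ∀ a, D (f a) = d a := by
  have h0 : d 0 = 0 := by simpa using hadd 0 0
  have h1 : d 1 = 0 := by simpa using hmul 1 1
  let g : A →+* TrivSqZeroExt ℂ ℂ :=
    { toFun := fun a => TrivSqZeroExt.inl (f a) + TrivSqZeroExt.inr (d a)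
      map_one' := by ext <;> simp [h1]
      map_zero' := by ext <;> simp [h0]
      map_add' := fun a b => by ext <;> simp [hadd]
      map_mul' := fun a b => by ext <;> simp [hmul, mul_comm] }
  let p : TrivSqZeroExt ℂ ℂ →+* ℂ := (TrivSqZeroExt.fstHom ℂ ℂ ℂ : _ →+* _)
  obtain ⟨h, hh1, hh2⟩ := lift_ringHom f g p hf (fun x => ⟨TrivSqZeroExt.inl x, by simp [p]⟩)
    (by
      rw [eq_bot_iff, pow_two, Ideal.mul_le]
      intro r hr s hs
      have hr' : r.fst = 0 := hr
      have hs' : s.fst = 0 := hs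
      simp only [Ideal.mem_bot]
      ext <;> simp [hr', hs']) (by ext a; simp [p, g])
  have hfst : ∀ x, (h x).fst = x := fun x => congrArg (fun q => q x) hh1
  refine ⟨Derivation.mk' { toFun := fun x => (h x).snd, map_add' := by intro x y; simp, map_smul' := by intro x y; simp } ?_, ?_⟩
  · intro a b
    simp [hfst, mul_comm]
  · intro a
    have : h (f a) = g a := congrArg (fun q => q a) hh2
    simp [this, g]

theorem der_alg {F : Type} [Field F] [Algebra F ℂ] (D : Derivation ℤ ℂ ℂ)
    (h : ∀ a : F, D (algebraMap F ℂ a) = 0) (y : ℂ) (hy : IsAlgebraic F y) : D y = 0 := by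
  let D' : Derivation F ℂ ℂ := Derivation.mk'
    { toFun := D
      map_add' := fun a b => by simp
      map_smul' := fun a b => by simp [Algebra.smul_def, h] } (by intro a b; simp)
  have h1 := D'.map_aeval (minpoly F y) y
  rw [minpoly.aeval] at h1
  have : CharZero F := (algebraMap F ℂ).charZero
  have h2 : (Polynomial.aeval y) (Polynomial.derivative (minpoly F y)) ≠ 0 :=
    (minpoly.irreducible hy.isIntegral).separable.aeval_derivative_ne_zero (minpoly.aeval F y)
  have h3 : D' y = 0 := by
    rw [map_zero] at h1
    exact (smul_eq_zero.1 h1.symm).resolve_left h2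
  exact h3

/-- the field of constants of a derivation -/
noncomputable def constF (D : Derivation ℤ ℂ ℂ) : IntermediateField ℚ ℂ where
  carrier := {a | D a = 0}
  mul_mem' := by intro a b ha hb; simp_all
  one_mem' := by simp
  add_mem' := by intro a b ha hb; simp_all
  zero_mem' := by simp
  algebraMap_mem' := by
    intro r
    have : D ((r.den : ℂ) * (r : ℂ)) = 0 := by
      have : (r.den : ℂ) * (r : ℂ) = r.num := by exact_mod_cast Rat.den_mul_eq_num r
      rw [this]; simp
    rw [D.leibniz] at this
    simpa using this
  inv_mem' := by
    intro a ha
    by_cases h0 : a = 0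
    · simp [h0]
    have h1 : D (a * a⁻¹) = 0 := by rw [mul_inv_cancel₀ h0]; simp
    have ha' : D a = 0 := ha
    rw [D.leibniz, ha'] at h1
    simpa [h0] using h1

theorem mem_constF {D : Derivation ℤ ℂ ℂ} {a : ℂ} : a ∈ constF D ↔ D a = 0 := Iff.rfl

open Polynomial in
/-- order of vanishing at `u = 0` -/
def ordP (k : Type) [Field k] [Algebra k ℂ] (u w : ℂ) (n : ℤ) : Prop :=
  ∃ a b : k[X], a.eval 0 ≠ 0 ∧ b.eval 0 ≠ 0 ∧ w * aeval u b = u ^ n * aeval u a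

open Polynomial in
/-- the set `u O` -/
def resP (k : Type) [Field k] [Algebra k ℂ] (u w : ℂ) : Prop :=
  ∃ g h : k[X], h.eval 0 ≠ 0 ∧ w * aeval u h = u * aeval u g

section
open Polynomial
variable {k : Type} [Field k] [Algebra k ℂ] {u : ℂ}

theorem aeval_ne (hu : Transcendental k u) {a : k[X]} (ha : a.eval 0 ≠ 0) : aeval u a ≠ 0 := by
  intro h
  apply ha
  rw [(transcendental_iff.1 hu) a h]; simp

theorem ordP_mul {w w' : ℂ} {n n' : ℤ} (hu0 : u ≠ 0)
    (h : ordP k u w n) (h' : ordP k u w' n') : ordP k u (w * w') (n + n') := by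
  obtain ⟨a, b, ha, hb, e⟩ := h
  obtain ⟨a', b', ha', hb', e'⟩ := h'
  refine ⟨a * a', b * b', by simp [ha, ha'], by simp [hb, hb'], ?_⟩
  rw [map_mul, map_mul, zpow_add₀ hu0]
  linear_combination w' * aeval u b' * e + u ^ n * aeval u a * e'

theorem ordP_inv {w : ℂ} {n : ℤ} (hu0 : u ≠ 0) (hw : w ≠ 0)
    (h : ordP k u w n) : ordP k u w⁻¹ (-n) := by
  obtain ⟨a, b, ha, hb, e⟩ := h
  refine ⟨b, a, hb, ha, ?_⟩
  rw [zpow_neg]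
  have := zpow_ne_zero n hu0
  field_simp
  linear_combination -e

theorem ordP_one : ordP k u 1 0 := ⟨1, 1, by simp, by simp, by simp⟩

theorem ordP_pow {w : ℂ} {n : ℤ} (hu0 : u ≠ 0) (h : ordP k u w n) (j : ℕ) :
    ordP k u (w ^ j) (j * n) := by
  induction j with
  | zero => simpa using ordP_one
  | succ j ih =>
    have := ordP_mul hu0 ih h
    rw [pow_succ]
    convert this using 1
    push_cast; ring

theorem ordP_zpow {w : ℂ} {n : ℤ} (hu0 : u ≠ 0) (hw : w ≠ 0)
    (h : ordP k u w n) (j : ℤ) : ordP k u (w ^ j) (j * n) := by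
  obtain ⟨j, rfl | rfl⟩ := j.eq_nat_or_neg
  · simpa using ordP_pow hu0 h j
  · have := ordP_inv hu0 (pow_ne_zero j hw) (ordP_pow hu0 h j)
    simpa using this

theorem ordP_prod {ι : Type} (s : Finset ι) {w : ι → ℂ} {n : ι → ℤ} (hu0 : u ≠ 0)
    (h : ∀ i, ordP k u (w i) (n i)) : ordP k u (∏ i ∈ s, w i) (∑ i ∈ s, n i) := by
  classical
  induction s using Finset.induction_on with
  | empty => simpa using ordP_one
  | insert i s hi ih => rw [Finset.prod_insert hi, Finset.sum_insert hi]; exact ordP_mul hu0 (h i) ih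

theorem ordP_u : ordP k u u 1 := ⟨1, 1, by simp, by simp, by simp⟩

theorem ordP_one_eq (hu : Transcendental k u) {n : ℕ} (h : ordP k u 1 n) : n = 0 := by
  obtain ⟨a, b, ha, hb, e⟩ := h
  by_contra hn
  have : aeval u (b - X ^ n * a) = 0 := by
    rw [one_mul, zpow_natCast] at e
    simp [e]
  have := (transcendental_iff.1 hu) _ this
  apply hb
  rw [sub_eq_zero.1 this]
  simp [hn]

theorem ordP_unique (hu : Transcendental k u) {w : ℂ} {n n' : ℤ} (hu0 : u ≠ 0) (hw : w ≠ 0)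
    (h : ordP k u w n) (h' : ordP k u w n') : n = n' := by
  have h1 := ordP_mul hu0 h (ordP_inv hu0 hw h')
  have h2 := ordP_mul hu0 h' (ordP_inv hu0 hw h)
  rw [mul_inv_cancel₀ hw] at h1 h2
  rcases le_total n n' with hle | hle
  · obtain ⟨m, hm⟩ := Int.eq_ofNat_of_zero_le (sub_nonneg.2 hle)
    have : m = 0 := ordP_one_eq hu (by rw [← hm]; exact h2)
    omega
  · obtain ⟨m, hm⟩ := Int.eq_ofNat_of_zero_le (sub_nonneg.2 hle)
    have : m = 0 := ordP_one_eq hu (by rw [← hm]; exact h1)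
    omega

theorem ordP_exists_poly {p : k[X]} (hp : p ≠ 0) : ∃ n : ℤ, ordP k u (aeval u p) n := by
  obtain ⟨q, hq, hd⟩ := exists_eq_pow_rootMultiplicity_mul_and_not_dvd p hp 0
  refine ⟨(rootMultiplicity 0 p : ℕ), q, 1, ?_, by simp, ?_⟩
  · rwa [dvd_iff_isRoot] at hd
  · conv_lhs => rw [hq]
    simp

theorem ordP_exists (hu0 : u ≠ 0) {w : ℂ} (hw : w ≠ 0)
    (h : w ∈ IntermediateField.adjoin k {u}) : ∃ n : ℤ, ordP k u w n := by
  obtain ⟨r, s, rfl⟩ := (IntermediateField.mem_adjoin_simple_iff k w).1 h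
  have hr : aeval u r ≠ 0 := by rintro h; simp [h] at hw
  have hs : aeval u s ≠ 0 := by rintro h; simp [h] at hw
  obtain ⟨n, hn⟩ := ordP_exists_poly (k := k) (u := u) (p := r) (by rintro rfl; simp at hr)
  obtain ⟨m, hm⟩ := ordP_exists_poly (k := k) (u := u) (p := s) (by rintro rfl; simp at hs)
  exact ⟨_, ordP_mul hu0 hn (ordP_inv hu0 hs hm)⟩

theorem resP_add {w w' : ℂ} (h : resP k u w) (h' : resP k u w') : resP k u (w + w') := by
  obtain ⟨a, b, hb, e⟩ := h
  obtain ⟨a', b', hb', e'⟩ := h'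
  refine ⟨a * b' + a' * b, b * b', by simp [hb, hb'], ?_⟩
  simp only [map_mul, map_add]
  linear_combination aeval u b' * e + aeval u b * e'

theorem resP_smul {w : ℂ} (c : k) (h : resP k u w) : resP k u (algebraMap k ℂ c * w) := by
  obtain ⟨a, b, hb, e⟩ := h
  refine ⟨C c * a, b, hb, ?_⟩
  simp only [map_mul, aeval_C]
  linear_combination algebraMap k ℂ c * e

theorem resP_sum {ι : Type} (s : Finset ι) {w : ι → ℂ} (h : ∀ i, resP k u (w i)) :
    resP k u (∑ i ∈ s, w i) := by
  classical
  induction s using Finset.induction_on with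
  | empty => exact ⟨0, 1, by simp, by simp⟩
  | insert i s hi ih => rw [Finset.sum_insert hi]; exact resP_add (h i) ih

theorem resP_const (hu : Transcendental k u) {c : k} (h : resP k u (algebraMap k ℂ c)) : c = 0 := by
  obtain ⟨a, b, hb, e⟩ := h
  have : aeval u (C c * b - X * a) = 0 := by simp [e]
  have := (transcendental_iff.1 hu) _ this
  have := congrArg (eval 0) this
  simpa [hb] using this

theorem der_aeval (D : Derivation ℤ ℂ ℂ) (hD : ∀ a : k, D (algebraMap k ℂ a) = 0) (hDu : D u = 1)
    (p : k[X]) : D (aeval u p) = aeval u (derivative p) := by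
  let D' : Derivation k ℂ ℂ := Derivation.mk'
    { toFun := D
      map_add' := fun a b => by simp
      map_smul' := fun a b => by simp [Algebra.smul_def, hD] } (by intro a b; simp)
  have h1 := D'.map_aeval p u
  have h2 : D (aeval u p) = aeval u (derivative p) * D u := h1
  rw [h2, hDu, mul_one]

theorem logder_mul (D : Derivation ℤ ℂ ℂ) {a b : ℂ} (ha : a ≠ 0) (hb : b ≠ 0) :
    D (a * b) / (a * b) = D a / a + D b / b := by
  simp only [D.leibniz, smul_eq_mul]; field_simp; ring

theorem logder_one (D : Derivation ℤ ℂ ℂ) : D (1 : ℂ) / 1 = 0 := by simp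

theorem logder_prod (D : Derivation ℤ ℂ ℂ) {ι : Type} (s : Finset ι) {w : ι → ℂ}
    (h : ∀ i, w i ≠ 0) : D (∏ i ∈ s, w i) / (∏ i ∈ s, w i) = ∑ i ∈ s, D (w i) / w i := by
  classical
  induction s using Finset.induction_on with
  | empty => simp
  | insert i s hi ih =>
    rw [Finset.prod_insert hi, Finset.sum_insert hi,
      logder_mul D (h i) (Finset.prod_ne_zero_iff.2 fun i _ => h i), ih]

theorem logder_pow (D : Derivation ℤ ℂ ℂ) {a : ℂ} (ha : a ≠ 0) (n : ℕ) :
    D (a ^ n) / a ^ n = n * (D a / a) := by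
  have := logder_prod D (Finset.range n) (w := fun _ => a) (fun _ => ha)
  simpa using this

theorem logder_inv (D : Derivation ℤ ℂ ℂ) {a : ℂ} (ha : a ≠ 0) :
    D a⁻¹ / a⁻¹ = - (D a / a) := by
  have := logder_mul D ha (inv_ne_zero ha)
  rw [mul_inv_cancel₀ ha, logder_one] at this
  linear_combination -this

theorem logder_zpow (D : Derivation ℤ ℂ ℂ) {a : ℂ} (ha : a ≠ 0) (n : ℤ) :
    D (a ^ n) / a ^ n = n * (D a / a) := by
  obtain ⟨j, rfl | rfl⟩ := n.eq_nat_or_neg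
  · simpa using logder_pow D ha j
  · have := logder_inv D (pow_ne_zero j ha)
    rw [logder_pow D ha j] at this
    simpa using this

theorem ordP_res (hu : Transcendental k u) (hu0 : u ≠ 0) (D : Derivation ℤ ℂ ℂ)
    (hD : ∀ a : k, D (algebraMap k ℂ a) = 0) (hDu : D u = 1)
    {w : ℂ} (hw : w ≠ 0) {n : ℤ} (h : ordP k u w n) : resP k u (u * (D w / w) - n) := by
  obtain ⟨a, b, ha, hb, e⟩ := h
  have ha' := aeval_ne hu ha
  have hb' := aeval_ne hu hb
  have h1 := logder_mul D hw hb'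
  rw [e, logder_mul D (zpow_ne_zero n hu0) ha', logder_zpow D hu0, hDu,
    der_aeval D hD hDu, der_aeval D hD hDu] at h1
  refine ⟨derivative a * b - derivative b * a, a * b, by simp [ha, hb], ?_⟩
  have h2 : D w / w = n * (1 / u) + aeval u (derivative a) / aeval u a
    - aeval u (derivative b) / aeval u b := by linear_combination -h1
  rw [h2]
  simp only [map_mul, map_sub]
  field_simp
  ring
end

section
open Polynomial

theorem exists_der_u {k : Type} [Field k] [Algebra k ℂ] {u : ℂ} (hu : Transcendental k u) :
    ∃ D : Derivation ℤ ℂ ℂ, (∀ a : k, D (algebraMap k ℂ a) = 0) ∧ D u = 1 := by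
  have : CharZero k := (algebraMap k ℂ).charZero
  obtain ⟨D, hD⟩ := extend_derivation (A := k[X]) (aeval u : k[X] →ₐ[k] ℂ).toRingHom
    (transcendental_iff_injective.1 hu) (fun p => aeval u (derivative p)) (by simp)
    (by intro a b; simp; ring)
  refine ⟨D, fun a => ?_, ?_⟩
  · have := hD (C a)
    simpa using this
  · have := hD X
    simpa using this

theorem der_conj {k : Type} [Field k] [Algebra k ℂ] {u : ℂ}
    [Algebra.IsAlgebraic (IntermediateField.adjoin k {u}) ℂ]
    (D : Derivation ℤ ℂ ℂ) (hD : ∀ a : k, D (algebraMap k ℂ a) = 0) (hDu : D u = 1)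
    (τ : ℂ →ₐ[IntermediateField.adjoin k {u}] ℂ) (x : ℂ) : D (τ x) = τ (D x) := by
  have hb : Function.Bijective τ := Algebra.IsAlgebraic.algHom_bijective τ
  let e := AlgEquiv.ofBijective τ hb
  let D' : Derivation ℤ ℂ ℂ := Derivation.mk'
    { toFun := fun x => e.symm (D (e x)) - D x
      map_add' := fun a b => by simp; ring
      map_smul' := fun a b => by simp; ring } (by intro a b; simp; ring)
  have hD' : ∀ x, D' x = e.symm (D (e x)) - D x := fun x => rfl
  have h1 : ∀ a : IntermediateField.adjoin k {u}, D' (algebraMap _ ℂ a) = 0 := by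
    rintro ⟨a, ha⟩
    rw [hD', AlgEquiv.commutes]
    obtain ⟨r, s, rfl⟩ := (IntermediateField.mem_adjoin_simple_iff k a).1 ha
    have hDF : D (aeval u r / aeval u s) ∈ IntermediateField.adjoin k {u} := by
      have hp : ∀ p : k[X], aeval u p ∈ IntermediateField.adjoin k {u} := fun p =>
        (IntermediateField.mem_adjoin_simple_iff k _).2 ⟨p, 1, by simp⟩
      by_cases hs : aeval u s = 0
      · rw [hs]; simp
      by_cases hr : aeval u r = 0
      · rw [hr]; simp
      have h1 := logder_mul D hr (inv_ne_zero hs)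
      rw [logder_inv D hs, der_aeval D hD hDu, der_aeval D hD hDu, ← div_eq_mul_inv,
        div_eq_iff (div_ne_zero hr hs)] at h1
      rw [h1]
      refine mul_mem (add_mem ?_ (neg_mem ?_)) ?_ <;> exact div_mem (hp _) (hp _)
    have := e.symm.commutes ⟨_, hDF⟩
    rw [sub_eq_zero]
    exact this
  have h2 : D' x = 0 := der_alg D' h1 x (Algebra.IsAlgebraic.isAlgebraic x)
  rw [hD', sub_eq_zero, AlgEquiv.symm_apply_eq] at h2
  exact h2

theorem residue_k {k : Type} [Field k] [Algebra k ℂ] {u : ℂ} (hu : Transcendental k u)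
    [Algebra.IsAlgebraic (IntermediateField.adjoin k {u}) ℂ] {s : ℕ} (y : Fin s → ℂ)
    (hy : ∀ i, y i ≠ 0) (m : Fin s → ℤ) (hum : u = ∏ i, y i ^ m i) (c : Fin s → k)
    (H : ∀ D : Derivation ℤ ℂ ℂ, (∀ a : k, D (algebraMap k ℂ a) = 0) →
      ∑ i, algebraMap k ℂ (c i) * (D (y i) / y i) = 0) :
    ∃ v : Fin s → ℤ, ∑ i, c i * v i = 0 ∧ ∑ i, m i * v i ≠ 0 := by
  have hu0 : u ≠ 0 := by rintro rfl; exact hu isAlgebraic_zero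
  obtain ⟨D, hD, hDu⟩ := exists_der_u hu
  let F := IntermediateField.adjoin k {u}
  let E := IntermediateField.adjoin F (Set.range y)
  have : CharZero F := (algebraMap F ℂ).charZero
  have hfin : FiniteDimensional F E := IntermediateField.finiteDimensional_adjoin
    (fun x _ => (Algebra.IsAlgebraic.isAlgebraic (R := F) x).isIntegral)
  let Y : Fin s → E := fun i => ⟨y i, IntermediateField.subset_adjoin _ _ ⟨i, rfl⟩⟩
  let N : Fin s → ℂ := fun i => algebraMap F ℂ (Algebra.norm F (Y i))
  have hN : ∀ i, N i = ∏ σ : E →ₐ[F] ℂ, σ (Y i) := fun i =>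
    Algebra.norm_eq_prod_embeddings F ℂ (Y i)
  have hY0 : ∀ i, Y i ≠ 0 := fun i h => hy i (congrArg Subtype.val h)
  have hσ0 : ∀ i (σ : E →ₐ[F] ℂ), σ (Y i) ≠ 0 := fun i σ => by simpa using hY0 i
  have hN0 : ∀ i, N i ≠ 0 := fun i => by
    rw [hN]; exact Finset.prod_ne_zero_iff.2 fun σ _ => hσ0 i σ
  have hc : ∀ (τ : ℂ →ₐ[F] ℂ) (a : k), τ (algebraMap k ℂ a) = algebraMap k ℂ a := fun τ a => by
    have := τ.commutes (algebraMap k F a)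
    exact this
  have hsum : ∑ i, algebraMap k ℂ (c i) * (D (N i) / N i) = 0 := by
    have h1 : ∀ σ : E →ₐ[F] ℂ, ∑ i, algebraMap k ℂ (c i) * (D (σ (Y i)) / σ (Y i)) = 0 := by
      intro σ
      obtain ⟨τ, hτ⟩ : ∃ τ : ℂ →ₐ[F] ℂ, ∀ x : E, τ x = σ x := by
        obtain ⟨τ, hτ⟩ := IntermediateField.exists_algHom_of_splits (F := F) (K := ℂ) (L := E)
          (fun x => ⟨(Algebra.IsAlgebraic.isAlgebraic (R := F) x).isIntegral,
            IsAlgClosed.splits _⟩) σ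
        exact ⟨τ, fun x => congrArg (fun q => q x) hτ⟩
      have h2 := congrArg τ (H D hD)
      rw [map_zero, map_sum] at h2
      rw [← h2]
      refine Finset.sum_congr rfl fun i _ => ?_
      rw [map_mul, hc, map_div₀, ← der_conj D hD hDu τ, ← hτ]
    calc _ = ∑ i, ∑ σ : E →ₐ[F] ℂ, algebraMap k ℂ (c i) * (D (σ (Y i)) / σ (Y i)) := by
          refine Finset.sum_congr rfl fun i _ => ?_
          rw [hN, logder_prod D _ (hσ0 i), Finset.mul_sum]
      _ = 0 := by
          rw [Finset.sum_comm]
          exact Finset.sum_eq_zero fun σ _ => h1 σ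
  choose v hv using fun i => ordP_exists hu0 (hN0 i) (Subtype.mem _)
  refine ⟨v, ?_, ?_⟩
  · have h1 : resP k u (∑ i, algebraMap k ℂ (- c i) * (u * (D (N i) / N i) - v i)) :=
      resP_sum _ fun i => resP_smul _ (ordP_res hu hu0 D hD hDu (hN0 i) (hv i))
    apply resP_const hu
    convert h1 using 1
    have h3 : ∑ i, algebraMap k ℂ (- c i) * (u * (D (N i) / N i) - v i) = 
      - u * (∑ i, algebraMap k ℂ (c i) * (D (N i) / N i)) + ∑ i, algebraMap k ℂ (c i) * v i := by
      rw [Finset.mul_sum, ← Finset.sum_add_distrib]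
      refine Finset.sum_congr rfl fun i _ => ?_
      rw [map_neg]; ring
    rw [h3, hsum]
    simp
  · have h1 : ordP k u (∏ i, N i ^ m i) (∑ i, m i * v i) :=
      ordP_prod _ hu0 fun i => ordP_zpow hu0 (hN0 i) (hv i) (m i)
    have h2 : ∏ i, N i ^ m i = u ^ Module.finrank F E := by
      have h3 : ∏ i, Y i ^ m i = algebraMap F E ⟨u, IntermediateField.mem_adjoin_simple_self k u⟩ := by
        apply Subtype.ext
        have : ((∏ i, Y i ^ m i : E) : ℂ) = ∏ i, y i ^ m i := by
          change E.val _ = _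
          rw [map_prod]
          refine Finset.prod_congr rfl fun i _ => ?_
          rw [map_zpow₀]; rfl
        rw [this, ← hum]; rfl
      have h4 := congrArg (fun z => algebraMap F ℂ (Algebra.norm F z)) h3
      simp only [Algebra.norm_algebraMap, map_prod, map_pow] at h4
      have h6 : ∀ i, N i ^ m i = algebraMap F ℂ (Algebra.norm F (Y i ^ m i)) := by
        intro i
        obtain ⟨j, hj | hj⟩ := (m i).eq_nat_or_neg
        · rw [hj]; simp [N]
        · have h7 : Algebra.norm F ((Y i ^ j)⁻¹) * Algebra.norm F (Y i ^ j) = 1 := by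
            rw [← map_mul, inv_mul_cancel₀ (pow_ne_zero j (hY0 i)), map_one]
          have h8 := congrArg (algebraMap F ℂ) h7
          rw [map_mul, map_one, map_pow, map_pow] at h8
          rw [hj, zpow_neg, zpow_neg, zpow_natCast, zpow_natCast]
          exact (eq_inv_of_mul_eq_one_left h8).symm
      rw [Finset.prod_congr rfl fun i _ => h6 i]
      exact h4
    rw [h2] at h1
    have h5 := ordP_unique hu hu0 (pow_ne_zero _ hu0) h1 (ordP_pow hu0 ordP_u _)
    rw [h5, mul_one]
    have : 0 < Module.finrank F E := Module.finrank_pos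
    exact_mod_cast this.ne'
end
theorem isAlg_transfer {F₁ F₂ : Type} [Field F₁] [Field F₂] [Algebra F₁ ℂ] [Algebra F₂ ℂ]
    (h : ∀ a : F₁, ∃ b : F₂, algebraMap F₂ ℂ b = algebraMap F₁ ℂ a) {x : ℂ}
    (hx : IsAlgebraic F₁ x) : IsAlgebraic F₂ x := by
  choose g hg using h
  have inj : Function.Injective (algebraMap F₂ ℂ) := (algebraMap F₂ ℂ).injective
  let f : F₁ →+* F₂ :=
    { toFun := g
      map_one' := inj (by rw [hg]; simp)
      map_zero' := inj (by rw [hg]; simp)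
      map_add' := fun a b => inj (by simp [hg])
      map_mul' := fun a b => inj (by simp [hg]) }
  letI : Algebra F₁ F₂ := f.toAlgebra
  haveI : IsScalarTower F₁ F₂ ℂ := IsScalarTower.of_algebraMap_eq (fun a => (hg a).symm)
  exact hx.tower_top F₂

theorem residue_C (C : IntermediateField ℚ ℂ) {u : ℂ} (hu : Transcendental C u)
    {s : ℕ} (y : Fin s → ℂ) (hy : ∀ i, y i ≠ 0) (m : Fin s → ℤ)
    (hum : u = ∏ i, y i ^ m i) (c : Fin s → ℂ) (hc : ∀ i, c i ∈ C)
    (H : ∀ D : Derivation ℤ ℂ ℂ, (∀ a ∈ C, D a = 0) →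
      ∑ i, c i * (D (y i) / y i) = 0) :
    ∃ v : Fin s → ℤ, ∑ i, c i * v i = 0 ∧ ∑ i, m i * v i ≠ 0 := by
  have h1 : AlgebraicIndepOn C (id : ℂ → ℂ) {u} := by
    have := (algebraicIndependent_singleton_iff (R := C) (ι := ({u} : Set ℂ))
      (x := fun i => (i : ℂ)) ⟨u, rfl⟩).2 hu
    exact this
  obtain ⟨S, huS, hS⟩ := exists_isTranscendenceBasis_superset h1
  have huS : u ∈ S := huS rfl
  let T : Set ℂ := S \ {u}
  have hST : S = insert u T := by simp [T, Set.insert_eq_of_mem huS]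
  have huT : u ∉ T := by simp [T]
  let k : IntermediateField C ℂ := IntermediateField.adjoin C T
  have hS1 : AlgebraicIndepOn C (id : ℂ → ℂ) S := hS.1
  rw [hST] at hS1
  have h2 := ((AlgebraicIndepOn.insert_iff huT).1 hS1).2
  have hut : Transcendental k u := by
    have := (IntermediateField.transcendental_adjoin_iff (F := C) (s := T) (x := u)).2
      (by rw [Set.image_id] at h2; exact h2)
    exact this
  have halg := hS.isAlgebraic_field
  haveI : Algebra.IsAlgebraic (IntermediateField.adjoin k {u}) ℂ := by
    constructor
    intro x
    refine isAlg_transfer (F₁ := IntermediateField.adjoin C (Set.range ((↑) : S → ℂ)))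
      ?_ (halg.isAlgebraic x)
    rintro ⟨a, ha⟩
    have hle : IntermediateField.adjoin C (Set.range ((↑) : S → ℂ)) ≤
        (IntermediateField.adjoin k {u}).restrictScalars C := by
      rw [IntermediateField.adjoin_le_iff]
      intro z hz
      rw [Subtype.range_coe, hST] at hz
      rcases hz with rfl | hz
      · exact IntermediateField.mem_adjoin_simple_self k _
      · have hzk : z ∈ k := IntermediateField.subset_adjoin C T hz
        exact (IntermediateField.adjoin k {u}).algebraMap_mem ⟨z, hzk⟩
    exact ⟨⟨a, hle ha⟩, rfl⟩
  obtain ⟨v, hv1, hv2⟩ := residue_k (k := k) hut y hy m hum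
    (fun i => algebraMap C k ⟨c i, hc i⟩) (by
      intro D hD
      exact H D (fun a ha => hD (algebraMap C k ⟨a, ha⟩)))
  refine ⟨v, ?_, hv2⟩
  have := congrArg (algebraMap k ℂ) hv1
  simpa using this
theorem finrank_range_le_of_ker {W X : Type} {m : ℕ} [AddCommGroup W] [Module ℂ W]
    [AddCommGroup X] [Module ℂ X]
    (l : W →ₗ[ℂ] X) {τ : Type} [Fintype τ] (e : W →ₗ[ℂ] (τ → ℂ)) (hm : Fintype.card τ = m)
    (h : LinearMap.ker e ≤ LinearMap.ker l) :
    Module.finrank ℂ (LinearMap.range l) ≤ m := by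
  have h1 := Submodule.range_liftQ (LinearMap.ker e) l h
  haveI : Module.Finite ℂ (W ⧸ LinearMap.ker e) :=
    Module.Finite.equiv e.quotKerEquivRange.symm
  rw [← h1]
  refine (LinearMap.finrank_range_le _).trans ?_
  rw [e.quotKerEquivRange.finrank_eq, ← hm, ← Module.finrank_fintype_fun_eq_card ℂ]
  exact Submodule.finrank_le _

/-- a nonzero vector killing all logarithmic derivatives -/
theorem ax_linear (d : Derivation ℤ ℂ ℂ) {s e : ℕ} (y : Fin s → ℂ)
    (hne : ∃ i, d (y i) / y i ≠ 0) (t : Finset ℂ)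
    (ht : ∀ i, IsAlgebraic (IntermediateField.adjoin (constF d) (t : Set ℂ)) (y i))
    (b : Fin s → Fin e → ℂ) (η : Fin e → ℂ)
    (hb : ∀ i, d (y i) / y i = ∑ j, b i j * η j) (hle : t.card + e ≤ s) :
    ∃ f : Fin s → ℂ, f ≠ 0 ∧
      (∀ D : Derivation ℤ ℂ ℂ, (∀ a ∈ constF d, D a = 0) → ∑ i, f i * (D (y i) / y i) = 0) ∧
      (∀ j, ∑ i, f i * b i j = 0) := by
  classical
  let W : Submodule ℂ (Derivation ℤ ℂ ℂ) :=
    { carrier := {D | ∀ a ∈ constF d, D a = 0}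
      add_mem' := by intro D E hD hE a ha; simp [hD a ha, hE a ha]
      zero_mem' := by intro a ha; simp
      smul_mem' := by intro c D hD a ha; simp [hD a ha] }
  let l : W →ₗ[ℂ] (Fin s → ℂ) :=
    { toFun := fun D i => (D : Derivation ℤ ℂ ℂ) (y i) / y i
      map_add' := by intro D E; ext i; simp [add_div]
      map_smul' := by intro c D; ext i; simp [mul_div_assoc] }
  let ev : W →ₗ[ℂ] (t → ℂ) :=
    { toFun := fun D i => (D : Derivation ℤ ℂ ℂ) (i : ℂ)
      map_add' := by intro D E; ext i; simp
      map_smul' := by intro c D; ext i; simp }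
  let L := LinearMap.range l
  have hL : Module.finrank ℂ L ≤ t.card := by
    refine finrank_range_le_of_ker l ev (by simp) ?_
    intro D hD
    rw [LinearMap.mem_ker] at hD ⊢
    have h1 : IntermediateField.adjoin (constF d) (t : Set ℂ) ≤
        { constF (D : Derivation ℤ ℂ ℂ) with
          algebraMap_mem' := fun a => mem_constF.2 (D.2 a a.2) } := by
      rw [IntermediateField.adjoin_le_iff]
      intro z hz
      exact mem_constF.2 (congrFun hD ⟨z, hz⟩)
    ext i
    have := der_alg (D : Derivation ℤ ℂ ℂ)
      (F := IntermediateField.adjoin (constF d) (t : Set ℂ))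
      (fun a => mem_constF.1 (h1 a.2)) (y i) (ht i)
    simp [l, this]
  let M : Submodule ℂ (Fin s → ℂ) := Submodule.span ℂ (Set.range fun j => fun i => b i j)
  have hM : Module.finrank ℂ M ≤ e := by
    have := finrank_range_le_card (R := ℂ) (fun j : Fin e => fun i => b i j)
    rw [Fintype.card_fin] at this
    exact this
  let z : Fin s → ℂ := fun i => d (y i) / y i
  have hzL : z ∈ L := ⟨⟨d, fun a ha => ha⟩, rfl⟩
  have hzM : z ∈ M := by
    have : z = ∑ j, η j • (fun i => b i j) := by
      ext i; simp [z, hb, mul_comm]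
    rw [this]
    exact Submodule.sum_mem _ fun j _ => Submodule.smul_mem _ _ (Submodule.subset_span ⟨j, rfl⟩)
  have hinf : 0 < Module.finrank ℂ (L ⊓ M : Submodule ℂ (Fin s → ℂ)) := by
    rw [Module.finrank_pos_iff_exists_ne_zero]
    refine ⟨⟨z, hzL, hzM⟩, ?_⟩
    intro h
    obtain ⟨i, hi⟩ := hne
    exact hi (congrFun (congrArg Subtype.val h) i)
  have hsum := Submodule.finrank_sup_add_finrank_inf_eq L M
  have hlt : L ⊔ M < ⊤ := by
    rw [lt_top_iff_ne_top]
    intro h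
    rw [h, finrank_top] at hsum
    simp at hsum
    omega
  obtain ⟨φ, hφ0, hφ⟩ := Submodule.exists_le_ker_of_lt_top _ hlt
  have hev : ∀ w : Fin s → ℂ, φ w = ∑ i, φ (fun j => if i = j then 1 else 0) * w i := by
    intro w
    rw [LinearMap.pi_apply_eq_sum_univ φ w]
    simp [mul_comm]
  refine ⟨fun i => φ (fun j => if i = j then 1 else 0), ?_, ?_, ?_⟩
  · intro h
    apply hφ0
    ext w
    simp
    rw [hev]
    refine Finset.sum_eq_zero fun i _ => ?_
    have := congrFun h i
    change φ _ = 0 at this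
    rw [this]; simp
  · intro D hD
    rw [← hev (fun i => D (y i) / y i)]
    exact hφ (Submodule.mem_sup_left ⟨⟨D, hD⟩, rfl⟩)
  · intro j
    rw [← hev (fun i => b i j)]
    exact hφ (Submodule.mem_sup_right (Submodule.subset_span ⟨j, rfl⟩))

theorem ax_const (d : Derivation ℤ ℂ ℂ) {s e : ℕ} (y : Fin s → ℂ)
    (hy : ∀ i, y i ≠ 0)
    (b : Fin s → Fin e → ℂ) (hbc : ∀ i j, d (b i j) = 0) (η : Fin e → ℂ)
    (hb : ∀ i, d (y i) / y i = ∑ j, b i j * η j)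
    (hex : ∃ f : Fin s → ℂ, f ≠ 0 ∧
      (∀ D : Derivation ℤ ℂ ℂ, (∀ a ∈ constF d, D a = 0) → ∑ i, f i * (D (y i) / y i) = 0) ∧
      (∀ j, ∑ i, f i * b i j = 0)) :
    ∃ c : Fin s → ℂ, (∃ i, c i = 1) ∧ (∀ i, d (c i) = 0) ∧
      (∀ D : Derivation ℤ ℂ ℂ, (∀ a ∈ constF d, D a = 0) → ∑ i, c i * (D (y i) / y i) = 0) := by
  classical
  let P : (Fin s → ℂ) → Prop := fun f =>
      (∀ D : Derivation ℤ ℂ ℂ, (∀ a ∈ constF d, D a = 0) → ∑ i, f i * (D (y i) / y i) = 0) ∧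
      (∀ j, ∑ i, f i * b i j = 0)
  let sup : (Fin s → ℂ) → Finset (Fin s) := fun f => Finset.univ.filter fun i => f i ≠ 0
  have hexn : ∃ n, ∃ f : Fin s → ℂ, f ≠ 0 ∧ P f ∧ (sup f).card = n := by
    obtain ⟨f, h1, h2⟩ := hex
    exact ⟨_, f, h1, h2, rfl⟩
  obtain ⟨f, hf0, hf, hfc⟩ := Nat.find_spec hexn
  have hmin : ∀ g, P g → (sup g).card < (sup f).card → g = 0 := by
    intro g hg hlt
    by_contra hg0
    rw [hfc] at hlt
    exact Nat.find_min hexn hlt ⟨g, hg0, hg, rfl⟩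
  obtain ⟨i0, hi0⟩ : ∃ i, f i ≠ 0 := by
    by_contra h
    push Not at h
    exact hf0 (funext h)
  let g : Fin s → ℂ := fun i => (f i0)⁻¹ * f i
  have hg : P g := by
    constructor
    · intro D hD
      simp only [g, mul_assoc, ← Finset.mul_sum, hf.1 D hD, mul_zero]
    · intro j
      simp only [g, mul_assoc, ← Finset.mul_sum, hf.2 j, mul_zero]
  have hgi : g i0 = 1 := by simp [g, hi0]
  let g' : Fin s → ℂ := fun i => d (g i)
  have hg' : P g' := by
    constructor
    · intro D hD
      have h1 := congrArg d (hg.1 D hD)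
      have h2 := hg.1 ⁅d, D⁆ (by
        intro a ha
        rw [Derivation.commutator_apply, hD a ha, mem_constF.1 ha]; simp)
      have h3 : ∑ i, g i * D (d (y i) / y i) = 0 := by
        have : ∀ i, D (d (y i) / y i) = ∑ j, b i j * D (η j) := by
          intro i
          rw [hb i, map_sum]
          refine Finset.sum_congr rfl fun j _ => ?_
          rw [Derivation.leibniz, hD _ (mem_constF.2 (hbc i j))]
          simp
        simp_rw [this, Finset.mul_sum]
        rw [Finset.sum_comm]
        refine Finset.sum_eq_zero fun j _ => ?_
        simp_rw [← mul_assoc]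
        rw [← Finset.sum_mul, hg.2 j, zero_mul]
      have h4 : ∀ i, d (g i * (D (y i) / y i)) = g' i * (D (y i) / y i) +
          (g i * (⁅d, D⁆ (y i) / y i) + g i * D (d (y i) / y i)) := by
        intro i
        have := hy i
        rw [Derivation.leibniz, Derivation.leibniz_div, Derivation.leibniz_div,
          Derivation.commutator_apply]
        simp only [smul_eq_mul, g']
        field_simp
        ring
      rw [map_sum] at h1
      simp_rw [h4] at h1
      rw [Finset.sum_add_distrib, Finset.sum_add_distrib, h2, h3] at h1
      simpa using h1
    · intro j
      have h1 := congrArg d (hg.2 j)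
      rw [map_sum] at h1
      simpa [Derivation.leibniz, hbc, mul_comm, g'] using h1
  have hg0 : g' = 0 := by
    apply hmin g' hg'
    apply Finset.card_lt_card
    rw [Finset.ssubset_iff_of_subset]
    · exact ⟨i0, by simp [sup, hi0], by simp [sup, g', hgi]⟩
    · intro i
      simp only [sup, Finset.mem_filter, Finset.mem_univ, true_and]
      intro h hfi
      apply h
      simp [g', g, hfi]
  exact ⟨g, ⟨i0, hgi⟩, fun i => congrFun hg0 i, hg.1⟩

theorem ax (d : Derivation ℤ ℂ ℂ) {s : ℕ} (y : Fin s → ℂ) (hy : ∀ i, y i ≠ 0)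
    (hli : LinearIndependent ℚ (fun i => d (y i) / y i)) (hs : 0 < s) (t : Finset ℂ)
    (ht : ∀ i, IsAlgebraic (IntermediateField.adjoin (constF d) (t : Set ℂ)) (y i)) :
    s + 1 ≤ t.card + Module.finrank (constF d)
      (Submodule.span (constF d) (Set.range fun i => d (y i) / y i)) := by
  by_contra hcon
  set C := constF d with hC
  set V := Submodule.span C (Set.range fun i => d (y i) / y i) with hV
  haveI : Module.Finite C V := Module.Finite.span_of_finite C (Set.finite_range _)
  let bas := Module.finBasis C V
  let v : Fin s → V := fun i => ⟨d (y i) / y i, Submodule.subset_span ⟨i, rfl⟩⟩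
  let b : Fin s → Fin (Module.finrank C V) → ℂ := fun i j => (bas.repr (v i) j : ℂ)
  let η : Fin (Module.finrank C V) → ℂ := fun j => (bas j : ℂ)
  have hbc : ∀ i j, d (b i j) = 0 := fun i j => (bas.repr (v i) j).2
  have hb : ∀ i, d (y i) / y i = ∑ j, b i j * η j := by
    intro i
    have := congrArg (Subtype.val) (bas.sum_repr (v i))
    rw [AddSubmonoidClass.coe_finsetSum] at this
    exact this.symm
  obtain ⟨c, ⟨i0, hci⟩, hcd, hcD⟩ := ax_const d y hy b hbc η hb
    (ax_linear d y ⟨⟨0, hs⟩, hli.ne_zero _⟩ t ht b η hb (by omega))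
  obtain ⟨φ₀, hφ₀⟩ := Module.exists_dual_forall_apply_ne_zero (K := ℚ)
    (fun _ : Unit => (1 : ℂ)) (by simp)
  obtain ⟨N, hN⟩ := IsLocalization.exist_integer_multiples_of_finite (nonZeroDivisors ℤ)
    (fun i => φ₀ (c i))
  have hN' : ∀ i, ∃ m : ℤ, (m : ℚ) = (N : ℤ) * φ₀ (c i) := by
    intro i
    obtain ⟨m, hm⟩ := hN i
    exact ⟨m, by simpa using hm⟩
  choose m hm using hN'
  have hN0 : ((N : ℤ) : ℚ) ≠ 0 := by
    exact_mod_cast nonZeroDivisors.coe_ne_zero N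
  have hmi : m i0 ≠ 0 := by
    intro h
    have := hm i0
    rw [h, hci] at this
    have h2 := mul_ne_zero hN0 (hφ₀ ())
    exact h2 (by simpa using this.symm)
  have hu : Transcendental C (∏ i, y i ^ m i) := by
    intro halg
    have h0 := der_alg d (F := C) (fun a => a.2) _ halg
    have h1 := logder_prod d Finset.univ (w := fun i => y i ^ m i)
      (fun i => zpow_ne_zero _ (hy i))
    rw [h0, zero_div] at h1
    simp_rw [logder_zpow d (hy _)] at h1
    have h2 := Fintype.linearIndependent_iff.1 hli (fun i => (m i : ℚ))
      (by simpa [Algebra.smul_def] using h1.symm) i0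
    exact hmi (by exact_mod_cast h2)
  obtain ⟨w, hw1, hw2⟩ := residue_C C hu y hy m rfl c hcd hcD
  apply hw2
  have h3 := congrArg φ₀ hw1
  rw [map_sum, map_zero] at h3
  have h4 : ∀ i, φ₀ (c i * (w i : ℂ)) = w i * φ₀ (c i) := by
    intro i
    have : c i * (w i : ℂ) = (w i) • c i := by simp [mul_comm]
    rw [this, map_zsmul]; simp
  simp_rw [h4] at h3
  have h5 : ((∑ i, m i * w i : ℤ) : ℚ) = 0 := by
    push_cast
    simp_rw [hm]
    have : ∀ i, ((N : ℤ) : ℚ) * φ₀ (c i) * w i = (N : ℤ) * (w i * φ₀ (c i)) := by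
      intro i; ring
    simp_rw [this, ← Finset.mul_sum, h3, mul_zero]
  exact_mod_cast h5
theorem exp_rat_pow (q : ℚ) (v : ℂ) :
    Complex.exp (q • v) ^ q.den = Complex.exp v ^ q.num := by
  rw [← Complex.exp_nat_mul, ← Complex.exp_int_mul]
  congr 1
  rw [Algebra.smul_def, ← mul_assoc]
  congr 1
  have : ((q.den : ℚ) * q : ℚ) = q.num := by rw [mul_comm]; exact Rat.mul_den_eq_num q
  have h2 := congrArg (fun a : ℚ => (a : ℂ)) this
  push_cast at h2
  exact h2

theorem exp_span_alg {k : Type} [Field k] [Algebra k ℂ] {S : Set ℂ}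
    (h : ∀ v ∈ S, IsAlgebraic k (Complex.exp v)) {v : ℂ} (hv : v ∈ Submodule.span ℚ S) :
    IsAlgebraic k (Complex.exp v) := by
  induction hv using Submodule.span_induction with
  | mem x hx => exact h x hx
  | zero => rw [Complex.exp_zero]; exact isAlgebraic_one
  | add x y _ _ hx hy => rw [Complex.exp_add]; exact hx.mul hy
  | smul q x _ hx =>
    apply IsAlgebraic.of_pow q.den_pos
    rw [exp_rat_pow]
    obtain ⟨j, hj | hj⟩ := q.num.eq_nat_or_neg
    · rw [hj, zpow_natCast]; exact hx.pow j
    · rw [hj, zpow_neg, zpow_natCast]; exact (hx.pow j).inv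

theorem exp_span_der (d : Derivation ℤ ℂ ℂ) {S : Set ℂ}
    (h : ∀ v ∈ S, d (Complex.exp v) / Complex.exp v = d v) {v : ℂ}
    (hv : v ∈ Submodule.span ℚ S) :
    d (Complex.exp v) / Complex.exp v = d v := by
  induction hv using Submodule.span_induction with
  | mem x hx => exact h x hx
  | zero => simp
  | add x y _ _ hx hy =>
    rw [Complex.exp_add, logder_mul d (Complex.exp_ne_zero _) (Complex.exp_ne_zero _), hx, hy,
      map_add]
  | smul q x _ hx =>
    have h1 := logder_zpow d (Complex.exp_ne_zero (q • x)) q.den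
    rw [zpow_natCast, exp_rat_pow, logder_zpow d (Complex.exp_ne_zero x), hx] at h1
    have h2 : d (q • x) = q • d x := map_rat_smul d q x
    rw [h2]
    have h3 : ((q.den : ℚ) * q : ℚ) = q.num := by rw [mul_comm]; exact Rat.mul_den_eq_num q
    have h4 := congrArg (fun a : ℚ => (a : ℂ)) h3
    push_cast at h4
    have h5 : (q.den : ℂ) ≠ 0 := by exact_mod_cast q.den_ne_zero
    apply mul_left_cancel₀ h5
    rw [Int.cast_natCast] at h1
    rw [← h1, ← h4, Rat.smul_def, mul_assoc]

theorem trdegOver_bdd (E s : Set ℂ) (hs : s.Finite) :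
    BddAbove {k : ℕ | ∃ t : Finset ℂ, ↑t ⊆ s ∧ t.card = k ∧
    AlgebraicIndependent (IntermediateField.adjoin ℚ E) (fun x : {y : ℂ // y ∈ t} => (x : ℂ))} := by
  refine ⟨hs.toFinset.card, ?_⟩
  rintro k ⟨t, ht, rfl, -⟩
  exact Finset.card_le_card (by simpa using ht)

theorem trdegOver_spec (E s : Set ℂ) (hs : s.Finite) :
    ∃ t : Finset ℂ, ↑t ⊆ s ∧ t.card = trdegOver E s ∧
    AlgebraicIndependent (IntermediateField.adjoin ℚ E)
      (fun x : {y : ℂ // y ∈ t} => (x : ℂ)) := by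
  have := Nat.sSup_mem (s := {k : ℕ | ∃ t : Finset ℂ, ↑t ⊆ s ∧ t.card = k ∧
    AlgebraicIndependent (IntermediateField.adjoin ℚ E) (fun x : {y : ℂ // y ∈ t} => (x : ℂ))})
    ⟨0, ∅, by simp, by simp, by
      rw [algebraicIndependent_empty_type_iff]
      exact (algebraMap (IntermediateField.adjoin ℚ E) ℂ).injective⟩ (trdegOver_bdd E s hs)
  exact this

theorem le_trdegOver (E s : Set ℂ) (hs : s.Finite) {ι : Type} [Fintype ι] (v : ι → ℂ)
    (hv : AlgebraicIndependent (IntermediateField.adjoin ℚ E) v)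
    (hvs : ∀ i, IsAlgebraic (IntermediateField.adjoin (IntermediateField.adjoin ℚ E) s) (v i)) :
    Fintype.card ι ≤ trdegOver E s := by
  classical
  let M := AlgebraicIndependent.matroid (IntermediateField.adjoin ℚ E) ℂ
  have hind : M.Indep (Set.range v) :=
    AlgebraicIndependent.matroid_indep_iff.2 hv.to_subtype_range
  have hsub : Set.range v ⊆ M.closure s := by
    rintro _ ⟨i, rfl⟩
    rw [AlgebraicIndependent.matroid_closure_eq]
    exact IntermediateField.isAlgebraic_adjoin_iff.1 (hvs i)
  have h1 := hind.encard_le_eRk_of_subset hsub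
  rw [Matroid.eRk_closure_eq] at h1
  obtain ⟨I, hI⟩ := M.exists_isBasis s (by simp [M])
  have hIfin : I.Finite := hs.subset hI.subset
  rw [← hI.encard_eq_eRk, hIfin.encard_eq_coe_toFinset_card] at h1
  have hvc : (Set.range v).encard = Fintype.card ι := by
    rw [← Set.image_univ, hv.injective.encard_image]
    simp
  rw [hvc] at h1
  have h2 : Fintype.card ι ≤ hIfin.toFinset.card := by exact_mod_cast h1
  refine h2.trans ?_
  apply le_csSup (trdegOver_bdd E s hs)
  refine ⟨hIfin.toFinset, by simpa using hI.subset, rfl, ?_⟩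
  have h3 := AlgebraicIndependent.matroid_indep_iff.1 hI.indep
  exact h3.comp (fun x : {y // y ∈ hIfin.toFinset} => (⟨x, hIfin.mem_toFinset.1 x.2⟩ : I))
    (fun a b h => Subtype.ext (congrArg (fun z : I => (z : ℂ)) h))

/-- additivity of transcendence degree along an intermediate field -/
theorem trdegOver_add (E s₁ s : Set ℂ) (hs₁ : s₁.Finite) (hs : s.Finite)
    (C : IntermediateField ℚ ℂ) (hE : E ⊆ C) (h₁C : s₁ ⊆ C) (t : Finset ℂ)
    (ht : AlgebraicIndependent C (fun x : {y : ℂ // y ∈ t} => (x : ℂ)))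
    (h₁ : ∀ a ∈ s₁,
      IsAlgebraic (IntermediateField.adjoin (IntermediateField.adjoin ℚ E) s) a)
    (h₂ : ∀ a ∈ t,
      IsAlgebraic (IntermediateField.adjoin (IntermediateField.adjoin ℚ E) s) a) :
    trdegOver E s₁ + t.card ≤ trdegOver E s := by
  obtain ⟨t₁, ht₁, hc, hi⟩ := trdegOver_spec E s₁ hs₁
  have hle : IntermediateField.adjoin ℚ E ≤ C := IntermediateField.adjoin_le_iff.2 hE
  letI : Algebra (IntermediateField.adjoin ℚ E) C :=
    (IntermediateField.inclusion hle).toRingHom.toAlgebra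
  haveI : IsScalarTower (IntermediateField.adjoin ℚ E) C ℂ :=
    IsScalarTower.of_algebraMap_eq (fun _ => rfl)
  have := hi.sumElim_of_tower (S := C) (by
    rintro _ ⟨a, rfl⟩
    exact ⟨⟨a, h₁C (ht₁ a.2)⟩, rfl⟩) ht
  have h := le_trdegOver E s hs _ this (by
    rintro (a | a)
    · exact h₂ a a.2
    · exact h₁ a (ht₁ a.2))
  simp at h
  omega
theorem finrank_span_le (K C : IntermediateField ℚ ℂ) (hKC : K ≤ C) {s : ℕ} (w : Fin s → ℂ) :
    Module.finrank C (Submodule.span C (Set.range w)) ≤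
      Module.finrank K (Submodule.span K (Set.range w)) := by
  haveI : Module.Finite K (Submodule.span K (Set.range w)) :=
    Module.Finite.span_of_finite K (Set.finite_range _)
  let bas := Module.finBasis K (Submodule.span K (Set.range w))
  let η : Fin (Module.finrank K (Submodule.span K (Set.range w))) → ℂ := fun j => (bas j : ℂ)
  have h1 : Submodule.span C (Set.range w) ≤ Submodule.span C (Set.range η) := by
    rw [Submodule.span_le]
    rintro _ ⟨i, rfl⟩
    have := congrArg (Subtype.val)
      (bas.sum_repr (⟨w i, Submodule.subset_span ⟨i, rfl⟩⟩ : Submodule.span K (Set.range w)))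
    rw [AddSubmonoidClass.coe_finsetSum] at this
    change _ = w i at this
    rw [← this]
    refine Submodule.sum_mem _ fun j _ => ?_
    exact Submodule.smul_mem (Submodule.span C (Set.range η))
      (⟨_, hKC (bas.repr ⟨w i, Submodule.subset_span ⟨i, rfl⟩⟩ j).2⟩ : C)
      (Submodule.subset_span ⟨j, rfl⟩)
  haveI : Module.Finite C (Submodule.span C (Set.range η)) :=
    Module.Finite.span_of_finite C (Set.finite_range _)
  refine (Submodule.finrank_mono h1).trans ?_
  have := finrank_range_le_card (R := C) η
  rw [Fintype.card_fin] at this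
  exact this

theorem linDim_ineq (K : IntermediateField ℚ ℂ) (B : Set ℂ) (d : Derivation ℤ ℂ ℂ)
    (hK : ∀ a ∈ K, d a = 0) (hB : ∀ a ∈ B, d a = 0) {n r s : ℕ} (x : Fin n → ℂ)
    (y : Fin r → ℂ) (z : Fin s → ℂ)
    (hy : ∀ i, y i ∈ Submodule.span ℚ (Set.range x)) (hyd : ∀ i, d (y i) = 0)
    (hz : ∀ i, z i ∈ Submodule.span ℚ (Set.range x)) :
    linDimOver K B (Set.range y) +
      Module.finrank (constF d) (Submodule.span (constF d) (Set.range fun i => d (z i))) ≤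
      linDimOver K B (Set.range x) := by
  let dK : ℂ →ₗ[K] ℂ :=
    { toFun := d
      map_add' := fun a b => map_add d a b
      map_smul' := fun a b => by
        have : d ((a : ℂ) * b) = a * d b := by
          rw [Derivation.leibniz, hK a a.2]; simp
        exact this }
  have hBk : Submodule.span K B ≤ LinearMap.ker dK := by
    rw [Submodule.span_le]
    intro b hb
    exact hB b hb
  let db := (Submodule.span K B).liftQ dK hBk
  set X := (Submodule.span K (Set.range x)).map (Submodule.span K B).mkQ with hX
  set Y := (Submodule.span K (Set.range y)).map (Submodule.span K B).mkQ with hY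
  haveI : Module.Finite K (Submodule.span K (Set.range x)) :=
    Module.Finite.span_of_finite K (Set.finite_range _)
  haveI : Module.Finite K X := Module.Finite.map _ _
  have hqk := Submodule.span_le_restrictScalars ℚ K (Set.range x)
  have hYX : Y ≤ X := by
    apply Submodule.map_mono
    rw [Submodule.span_le]
    rintro _ ⟨i, rfl⟩
    exact hqk (hy i)
  let g : X →ₗ[K] ℂ := db ∘ₗ X.subtype
  have hrn := LinearMap.finrank_range_add_finrank_ker g
  have h1 : Module.finrank K Y ≤ Module.finrank K (LinearMap.ker g) := by
    rw [← Submodule.finrank_map_subtype_eq]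
    haveI : Module.Finite K (Submodule.map X.subtype (LinearMap.ker g)) := Module.Finite.map _ _
    apply Submodule.finrank_mono
    intro a ha
    refine ⟨⟨a, hYX ha⟩, ?_, rfl⟩
    change db a = 0
    obtain ⟨b, hb, rfl⟩ := ha
    change dK b = 0
    have : Submodule.span K (Set.range y) ≤ LinearMap.ker dK := by
      rw [Submodule.span_le]
      rintro _ ⟨i, rfl⟩
      exact hyd i
    exact this hb
  have h2 : Module.finrank K (Submodule.span K (Set.range fun i => d (z i))) ≤
      Module.finrank K (LinearMap.range g) := by
    apply Submodule.finrank_mono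
    rw [Submodule.span_le]
    rintro _ ⟨i, rfl⟩
    exact ⟨⟨(Submodule.span K B).mkQ (z i), ⟨z i, hqk (hz i), rfl⟩⟩, rfl⟩
  have h3 := finrank_span_le K (constF d) (fun a ha => hK a ha) (fun i => d (z i))
  change Module.finrank K Y + _ ≤ Module.finrank K X
  omega

theorem der_contra (K : IntermediateField ℚ ℂ) (B : Set ℂ)
    (hstrong : ∀ (n : ℕ) (x : Fin n → ℂ), deltaK K B x ≥ 0)
    {n : ℕ} (x : Fin n → ℂ)
    (hli : LinearIndependent ℚ (fun i => (Submodule.span ℚ B).mkQ (x i)))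
    (hδ : deltaK K B x = 0) (d : Derivation ℤ ℂ ℂ)
    (hK : ∀ a ∈ K, d a = 0) (hB : ∀ a ∈ B, d a = 0) (hE : ∀ a ∈ B, d (Complex.exp a) = 0)
    (hx : ∀ i, d (Complex.exp (x i)) = Complex.exp (x i) * d (x i))
    (hne : ∃ i, d (x i) ≠ 0) : False := by
  classical
  set V := Submodule.span ℚ (Set.range x) with hV
  haveI : Module.Finite ℚ V := Module.Finite.span_of_finite ℚ (Set.finite_range _)
  let dQ : ℂ →ₗ[ℚ] ℂ :=
    { toFun := d
      map_add' := fun a b => map_add d a b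
      map_smul' := fun a b => map_rat_smul d a b }
  let T : V →ₗ[ℚ] ℂ := dQ ∘ₗ V.subtype
  set r := Module.finrank ℚ (LinearMap.ker T)
  set s := Module.finrank ℚ (LinearMap.range T)
  have hrs : s + r = n := by
    have h1 := LinearMap.finrank_range_add_finrank_ker T
    have h2 : LinearIndependent ℚ x := LinearIndependent.of_comp (Submodule.span ℚ B).mkQ hli
    have h3 := finrank_span_eq_card h2
    rw [Fintype.card_fin] at h3
    exact h1.trans h3
  have hs : 0 < s := by
    rw [Module.finrank_pos_iff_exists_ne_zero]
    obtain ⟨i, hi⟩ := hne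
    refine ⟨⟨d (x i), ⟨⟨x i, Submodule.subset_span ⟨i, rfl⟩⟩, rfl⟩⟩, ?_⟩
    intro h
    exact hi (congrArg Subtype.val h)
  let bker := Module.finBasis ℚ (LinearMap.ker T)
  let bz := Module.finBasis ℚ (LinearMap.range T)
  let y : Fin r → ℂ := fun i => ((bker i : V) : ℂ)
  have hyV : ∀ i, y i ∈ V := fun i => (bker i : V).2
  have hyd : ∀ i, d (y i) = 0 := fun i => (bker i).2
  have hyli : LinearIndependent ℚ y := by
    have := bker.linearIndependent.map' (V.subtype ∘ₗ (LinearMap.ker T).subtype) (by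
      rw [LinearMap.ker_eq_bot]
      exact Subtype.val_injective.comp Subtype.val_injective)
    exact this
  have hz' : ∀ j, ∃ v : V, T v = bz j := fun j => (bz j).2
  choose z' hz' using hz'
  let z : Fin s → ℂ := fun j => (z' j : ℂ)
  have hzV : ∀ i, z i ∈ V := fun i => (z' i).2
  have hdz : LinearIndependent ℚ (fun i => d (z i)) := by
    have := bz.linearIndependent.map' (LinearMap.range T).subtype (by simp)
    have heq : (fun i => d (z i)) = (LinearMap.range T).subtype ∘ bz := by
      ext j
      exact hz' j
    rw [heq]
    exact this
  have hexp : ∀ v ∈ V, d (Complex.exp v) / Complex.exp v = d v := by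
    intro v hv
    refine exp_span_der d ?_ hv
    rintro _ ⟨i, rfl⟩
    rw [hx i, mul_div_cancel_left₀ _ (Complex.exp_ne_zero _)]
  -- linear dimension over the rationals
  have hdisj := Submodule.range_ker_disjoint (v := x) (f := (Submodule.span ℚ B).mkQ) hli
  have hylib : LinearIndependent ℚ ((Submodule.span ℚ B).mkQ ∘ y) := by
    refine hyli.map (hdisj.mono_left ?_)
    rw [Submodule.span_le]
    rintro _ ⟨i, rfl⟩
    exact hyV i
  have hqy : linDimOver ℚ B (Set.range y) = r := by
    unfold linDimOver
    rw [Submodule.map_span, ← Set.range_comp, finrank_span_eq_card hylib, Fintype.card_fin]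
  have hqx : linDimOver ℚ B (Set.range x) = n := by
    unfold linDimOver
    rw [Submodule.map_span, ← Set.range_comp]
    have := finrank_span_eq_card hli
    rw [Fintype.card_fin] at this
    exact this
  have hKd := linDim_ineq K B d hK hB x y z hyV hyd hzV
  -- transcendence degree
  let C := constF d
  let M := AlgebraicIndependent.matroid C ℂ
  let Z : Set ℂ := Set.range fun i => Complex.exp (z i)
  have hZf : Z.Finite := Set.finite_range _
  obtain ⟨I, hI⟩ := M.exists_isBasis Z (by simp [M])
  have hIfin : I.Finite := hZf.subset hI.subset
  let t := hIfin.toFinset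
  have htI : (t : Set ℂ) = I := hIfin.coe_toFinset
  have hIb := AlgebraicIndependent.matroid_isBasis_iff.1 hI
  have hlog : (fun i => d (Complex.exp (z i)) / Complex.exp (z i)) = fun i => d (z i) := by
    ext i
    exact hexp _ (hzV i)
  have hax := ax d (fun i => Complex.exp (z i)) (fun i => Complex.exp_ne_zero _) (by
    rw [hlog]
    exact hdz) hs t (by
      intro i
      rw [htI]
      exact IntermediateField.isAlgebraic_adjoin_iff.2 (hIb.2.2 _ ⟨i, rfl⟩))
  rw [hlog] at hax
  have halg : ∀ v ∈ V, IsAlgebraic (IntermediateField.adjoin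
      (IntermediateField.adjoin ℚ (Complex.exp '' B)) (Set.range fun i => Complex.exp (x i)))
      (Complex.exp v) := by
    intro v hv
    refine exp_span_alg ?_ hv
    rintro _ ⟨i, rfl⟩
    exact isAlgebraic_algebraMap (⟨Complex.exp (x i),
      IntermediateField.subset_adjoin _ _ ⟨i, rfl⟩⟩ : IntermediateField.adjoin
      (IntermediateField.adjoin ℚ (Complex.exp '' B)) (Set.range fun i => Complex.exp (x i)))
  have htd := trdegOver_add (Complex.exp '' B) (Set.range fun i => Complex.exp (y i))
    (Set.range fun i => Complex.exp (x i)) (Set.finite_range _) (Set.finite_range _) C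
    (by rintro _ ⟨a, ha, rfl⟩; exact hE a ha)
    (by
      rintro _ ⟨i, rfl⟩
      have := hexp _ (hyV i)
      rw [hyd i, div_eq_zero_iff] at this
      exact this.resolve_right (Complex.exp_ne_zero _)) t
    (hIb.1.comp (fun x : {y // y ∈ t} => (⟨x, hIfin.mem_toFinset.1 x.2⟩ : I))
      (fun a b h => Subtype.ext (congrArg (fun z : I => (z : ℂ)) h)))
    (by
      rintro _ ⟨i, rfl⟩
      exact halg _ (hyV i))
    (by
      intro a ha
      obtain ⟨i, rfl⟩ := hI.subset (hIfin.mem_toFinset.1 ha)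
      exact halg _ (hzV i))
  have hst := hstrong r y
  unfold deltaK at hst hδ
  rw [hqy] at hst
  rw [hqx] at hδ
  omega
/-- the point `(x, exp x)` -/
noncomputable def graphPt {n : ℕ} (x : Fin n → ℂ) : Fin n ⊕ Fin n → ℂ :=
  Sum.elim x (fun i => Complex.exp (x i))

theorem graph_differentiable (F : Subfield ℂ) {n : ℕ} (p : MvPolynomial (Fin n ⊕ Fin n) F) :
    Differentiable ℂ (fun x : Fin n → ℂ => MvPolynomial.aeval (graphPt x) p) := by
  induction p using MvPolynomial.induction_on with
  | C a => simp
  | add p q hp hq => simp only [map_add]; exact hp.add hq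
  | mul_X p i hp =>
    simp only [map_mul, MvPolynomial.aeval_X]
    refine hp.mul ?_
    rcases i with i | i
    · simp only [graphPt, Sum.elim_inl]; fun_prop
    · simp only [graphPt, Sum.elim_inr]; fun_prop

theorem exists_der (F : Subfield ℂ) {n : ℕ} (x ξ : Fin n → ℂ)
    (H : ∀ p : MvPolynomial (Fin n ⊕ Fin n) F, MvPolynomial.aeval (graphPt x) p = 0 →
      fderiv ℂ (fun u : Fin n → ℂ => MvPolynomial.aeval (graphPt u) p) x ξ = 0) :
    ∃ D : Derivation ℤ ℂ ℂ, (∀ a ∈ F, D a = 0) ∧ (∀ i, D (x i) = ξ i) ∧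
      ∀ i, D (Complex.exp (x i)) = Complex.exp (x i) * ξ i := by
  let R := MvPolynomial (Fin n ⊕ Fin n) F
  let ev : R →ₐ[F] ℂ := MvPolynomial.aeval (graphPt x)
  let δ : R → ℂ := fun p => fderiv ℂ (fun u : Fin n → ℂ => MvPolynomial.aeval (graphPt u) p) x ξ
  have hadd : ∀ p q, δ (p + q) = δ p + δ q := by
    intro p q
    simp only [δ, map_add]
    rw [fderiv_fun_add (graph_differentiable F p x) (graph_differentiable F q x)]
    simp
  have hmul : ∀ p q, δ (p * q) = ev p * δ q + ev q * δ p := by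
    intro p q
    simp only [δ, map_mul]
    rw [fderiv_fun_mul (graph_differentiable F p x) (graph_differentiable F q x)]
    simp [ev]
  have hwd : ∀ p q, ev p = ev q → δ p = δ q := by
    intro p q h
    have h1 : δ (p - q) = 0 := H _ (by change ev (p - q) = 0; rw [map_sub, h, sub_self])
    have h2 := hadd (p - q) q
    rw [h1, sub_add_cancel, zero_add] at h2
    exact h2
  let A := ev.range
  have hsur : ∀ a : A, ∃ p, ev p = a := fun a => a.2
  choose π hπ using hsur
  obtain ⟨D, hD⟩ := extend_derivation (A := A) A.val.toRingHom Subtype.val_injective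
    (fun a => δ (π a))
    (by
      intro a b
      rw [← hadd]
      apply hwd
      rw [map_add, hπ, hπ, hπ]; rfl)
    (by
      intro a b
      change _ = (a : ℂ) * _ + (b : ℂ) * _
      rw [← hπ a, ← hπ b, ← hmul]
      apply hwd
      rw [map_mul, hπ, hπ, hπ]; rfl)
  have hDp : ∀ p, D (ev p) = δ p := by
    intro p
    have := hD ⟨ev p, ⟨p, rfl⟩⟩
    refine this.trans (hwd _ _ (hπ _))
  refine ⟨D, ?_, ?_, ?_⟩
  · intro a ha
    have e1 : ev (MvPolynomial.C ⟨a, ha⟩) = a := MvPolynomial.aeval_C _ _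
    have := hDp (MvPolynomial.C ⟨a, ha⟩)
    rw [e1] at this
    simp only [δ, MvPolynomial.aeval_C] at this
    simpa using this
  · intro i
    have e1 : ev (MvPolynomial.X (Sum.inl i)) = x i := MvPolynomial.aeval_X _ _
    have := hDp (MvPolynomial.X (Sum.inl i))
    rw [e1] at this
    simp only [δ, MvPolynomial.aeval_X, graphPt, Sum.elim_inl] at this
    rw [this]
    have h : HasFDerivAt (fun u : Fin n → ℂ => u i)
      (ContinuousLinearMap.proj (R := ℂ) (φ := fun _ : Fin n => ℂ) i) x := hasFDerivAt_apply i x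
    rw [h.fderiv]
    rfl
  · intro i
    have e1 : ev (MvPolynomial.X (Sum.inr i)) = Complex.exp (x i) := MvPolynomial.aeval_X _ _
    have := hDp (MvPolynomial.X (Sum.inr i))
    rw [e1] at this
    simp only [δ, MvPolynomial.aeval_X, graphPt, Sum.elim_inr] at this
    rw [this]
    have h : HasFDerivAt (fun u : Fin n → ℂ => u i)
      (ContinuousLinearMap.proj (R := ℂ) (φ := fun _ : Fin n => ℂ) i) x := hasFDerivAt_apply i x
    rw [h.cexp.fderiv]
    rfl

theorem countable_ideals (R : Type) [CommRing R] [IsNoetherianRing R] [Countable R] :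
    Countable (Ideal R) := by
  have h : ∀ I : Ideal R, ∃ s : Finset R, Ideal.span (s : Set R) = I :=
    fun I => (isNoetherianRing_iff_ideal_fg R).1 inferInstance I
  choose f hf using h
  refine Function.Injective.countable (f := f) ?_
  intro I J hIJ
  rw [← hf I, ← hf J, hIJ]

theorem countable_tuples (K : IntermediateField ℚ ℂ) (hKc : Set.Countable (K : Set ℂ))
    (B : Set ℂ) (hBc : B.Countable)
    (hstrong : ∀ (n : ℕ) (x : Fin n → ℂ), deltaK K B x ≥ 0) (n : ℕ) :
    Set.Countable {x : Fin n → ℂ |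
      LinearIndependent ℚ (fun i => (Submodule.span ℚ B).mkQ (x i)) ∧ deltaK K B x = 0} := by
  let S0 : Set ℂ := (K : Set ℂ) ∪ B ∪ Complex.exp '' B
  have hS0 : S0.Countable := (hKc.union hBc).union (hBc.image _)
  let F := Subfield.closure S0
  have hF : Countable F := by
    rw [← Cardinal.mk_le_aleph0_iff]
    refine (Subfield.cardinalMk_closure_le_max S0).trans ?_
    have := hS0.to_subtype
    exact max_le (Cardinal.mk_le_aleph0_iff.2 this) le_rfl
  let R := MvPolynomial (Fin n ⊕ Fin n) F
  have hR : Countable R := by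
    rw [← Cardinal.mk_le_aleph0_iff]
    refine MvPolynomial.cardinalMk_le_max.trans ?_
    exact max_le (max_le (Cardinal.mk_le_aleph0_iff.2 hF)
      (Cardinal.mk_le_aleph0_iff.2 inferInstance)) le_rfl
  have hI := countable_ideals R
  let J : (Fin n → ℂ) → Ideal R := fun x =>
    RingHom.ker (MvPolynomial.aeval (graphPt x) : R →ₐ[F] ℂ)
  set S := {x : Fin n → ℂ |
      LinearIndependent ℚ (fun i => (Submodule.span ℚ B).mkQ (x i)) ∧ deltaK K B x = 0} with hS
  have hcov : S ⊆ ⋃ I : Ideal R, {x ∈ S | J x = I} := by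
    intro x hx
    exact Set.mem_iUnion.2 ⟨J x, hx, rfl⟩
  refine Set.Countable.mono hcov (Set.countable_iUnion fun I => ?_)
  set T := {x ∈ S | J x = I} with hT
  have hdisc : DiscreteTopology T := by
    apply discreteTopology_of_noAccPts
    intro x hx hacc
    obtain ⟨ξ, hξ, hξ0⟩ := tangentConeAt_nonempty_of_properSpace (𝕜 := ℂ) hacc
    obtain ⟨D, hD1, hD2, hD3⟩ := exists_der F x ξ (by
      intro p hp
      have hpI : p ∈ I := by rw [← hx.2]; exact hp
      have h1 : HasFDerivWithinAt (fun u : Fin n → ℂ => MvPolynomial.aeval (graphPt u) p)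
          (fderiv ℂ (fun u : Fin n → ℂ => MvPolynomial.aeval (graphPt u) p) x) T x :=
        ((graph_differentiable F p) x).hasFDerivAt.hasFDerivWithinAt
      have h2 : HasFDerivWithinAt (fun u : Fin n → ℂ => MvPolynomial.aeval (graphPt u) p)
          (0 : (Fin n → ℂ) →L[ℂ] ℂ) T x := by
        refine (hasFDerivWithinAt_const (0 : ℂ) x T).congr ?_ hp
        intro u hu
        have : p ∈ J u := by rw [hu.2]; exact hpI
        exact this
      exact h1.unique_on h2 hξ)
    have hsub : S0 ⊆ F := Subfield.subset_closure
    refine der_contra K B hstrong x hx.1.1 hx.1.2 D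
      (fun a ha => hD1 a (hsub (Or.inl (Or.inl ha))))
      (fun a ha => hD1 a (hsub (Or.inl (Or.inr ha))))
      (fun a ha => hD1 _ (hsub (Or.inr ⟨a, ha, rfl⟩)))
      (fun i => by rw [hD2, hD3]) ?_
    by_contra hcon
    push Not at hcon
    apply hξ0
    ext i
    rw [← hD2, hcon]; rfl
  have : Countable T := TopologicalSpace.separableSpace_iff_countable.1 inferInstance
  exact Set.countable_coe_iff.1 this


/-- let `K` be a countable subfield of ℂ of finite transcendence
degree satisfying SC_K, and let `B ⊇ K` be countable and strong with respect
to `δ_K`. Then the set of `x₀ ∈ ℂ` lying in the ℚ-span of `B`, or contained in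
a tuple `x`, ℚ-linearly independent over the ℚ-span of `B`, with
`δ_K(x/B) = 0`, is countable. -/
theorem statement12 (K : IntermediateField ℚ ℂ)
    (hKcount : Set.Countable (K : Set ℂ))
    (htd : BddAbove {k : ℕ | ∃ t : Finset ℂ, ↑t ⊆ (K : Set ℂ) ∧ t.card = k ∧
      AlgebraicIndependent ℚ (fun x : {y : ℂ // y ∈ t} => (x : ℂ))})
    (hSC : ∀ (m : ℕ) (x : Fin m → ℂ),
      (linDim K (Set.range x) : ℤ) + trdeg (Set.range fun i => Complex.exp (x i))
        - linDim ℚ (Set.range x) ≥ -(trdeg (K : Set ℂ) : ℤ))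
    (B : Set ℂ) (hBcount : B.Countable) (hKB : (K : Set ℂ) ⊆ B)
    (hstrong : ∀ (n : ℕ) (x : Fin n → ℂ), deltaK K B x ≥ 0) :
    Set.Countable {x₀ : ℂ | x₀ ∈ Submodule.span ℚ B ∨
      ∃ (n : ℕ) (x : Fin n → ℂ), (∃ i, x i = x₀)
        ∧ LinearIndependent ℚ (fun i => (Submodule.span ℚ B).mkQ (x i))
        ∧ deltaK K B x = 0} := by
  have hspan : Set.Countable (Submodule.span ℚ B : Set ℂ) := by
    have h1 : Countable B := hBcount.to_subtype
    have h2 : Countable (Submodule.span ℚ (Set.range ((↑) : B → ℂ))) := inferInstance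
    rw [Subtype.range_coe] at h2
    exact Set.countable_coe_iff.1 h2
  refine Set.Countable.mono (s₂ := (Submodule.span ℚ B : Set ℂ) ∪ ⋃ n : ℕ, ⋃ i : Fin n,
    (fun x : Fin n → ℂ => x i) '' {x : Fin n → ℂ |
      LinearIndependent ℚ (fun i => (Submodule.span ℚ B).mkQ (x i)) ∧ deltaK K B x = 0}) ?_ ?_
  · rintro x₀ (h | ⟨n, x, ⟨i, rfl⟩, h1, h2⟩)
    · exact Or.inl h
    · exact Or.inr (Set.mem_iUnion.2 ⟨n, Set.mem_iUnion.2 ⟨i, x, ⟨h1, h2⟩, rfl⟩⟩)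
  · refine hspan.union (Set.countable_iUnion fun n => Set.countable_iUnion fun i => ?_)
    exact (countable_tuples K hKcount B hBcount hstrong n).image _
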